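/- ∫_{t ∈ span(𝒥)} ( ∑_{J ∈ 𝒥(t) ∪ ℋ(t)} r̃(𝒥(t) ∪ ℋ(t))(J) ) dt ≤ (d + 1) · ∫_{t ∈ span(𝒥)} ( ∑_{J ∈ 𝒥(t)} r̃(𝒥(t))(J) ) dt, where a sum over the empty job set is taken to be 0 (note that for t ∈ span(𝒥) the sets 𝒥(t) and 𝒥(t) ∪ ℋ(t) are nonempty, and both integrands are piecewise constant with finitely many pieces, so the integrals are well defined). -/

import Mathlib

open scoped Classical
open Finset MeasureTheory

namespace BSHM

noncomputable section

/-- The set of candidate parents of machine type `i`: types `j ∈ M` with `j > i`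
and a strictly smaller normalized cost rate per capacity unit. -/
def pset (m : ℕ) (g r : ℕ → ℝ) (i : ℕ) : Set ℕ :=
  {j | j ≤ m ∧ i < j ∧ r j / g j < r i / g i}

/-- The parent `p i` of machine type `i` (equal to `0` when the parent is undefined,
since any actual parent has index `≥ 2`). -/
def p (m : ℕ) (g r : ℕ → ℝ) (i : ℕ) : ℕ := sInf (pset m g r i)

/-- `pdef i` asserts that the parent of `i` is defined. -/
def pdef (m : ℕ) (g r : ℕ → ℝ) (i : ℕ) : Prop := (pset m g r i).Nonempty

/-- One step of the parent relation: `b` is the (defined) parent of `a`. -/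
def pstep (m : ℕ) (g r : ℕ → ℝ) (a b : ℕ) : Prop :=
  pdef m g r a ∧ b = p m g r a

/-- `P i`: the set consisting of `i` together with all of its iterated parents. -/
def P (m : ℕ) (g r : ℕ → ℝ) (i : ℕ) : Set ℕ :=
  {z | Relation.ReflTransGen (pstep m g r) i z}

/-- `A i`: the set of nodes in the tree rooted at `i`,
i.e. all `z ∈ M` having `i` as an ancestor (or equal to `i`). -/
def A (m : ℕ) (g r : ℕ → ℝ) (i : ℕ) : Set ℕ :=
  {z | 1 ≤ z ∧ z ≤ m ∧ i ∈ P m g r z}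

/-- `v i`: the lowest-indexed node in the tree rooted at `i`. -/
def v (m : ℕ) (g r : ℕ → ℝ) (i : ℕ) : ℕ := sInf (A m g r i)

/-- `y i`: the younger siblings of `i` (same parent status, smaller index). -/
def y (m : ℕ) (g r : ℕ → ℝ) (i : ℕ) : Set ℕ :=
  {z | 1 ≤ z ∧ z ≤ m ∧ z < i ∧ p m g r z = p m g r i}

/-- `esib i`: the elder siblings of `i`. -/
def esib (m : ℕ) (g r : ℕ → ℝ) (i : ℕ) : Set ℕ :=
  {z | 1 ≤ z ∧ z ≤ m ∧ i < z ∧ p m g r z = p m g r i}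

/-- `T k := {k} ∪ ⋃_{z ∈ P(k)} y(z)`. -/
def T (m : ℕ) (g r : ℕ → ℝ) (k : ℕ) : Set ℕ :=
  {k} ∪ ⋃ z ∈ P m g r k, y m g r z

/-- `T k` as a `Finset` (all relevant nodes lie in `{k} ∪ [1, m]`). -/
def TIcc (m : ℕ) (g r : ℕ → ℝ) (k : ℕ) : Finset ℕ :=
  (insert k (Finset.Icc 1 m)).filter (fun z => z ∈ T m g r k)

/-! ### Jobs and one-shot scheduling -/

variable {ι : Type*}

/-- The exact machine type of a job `J`: the least `z ∈ M` with `s J ≤ g z`. -/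
def mty (m : ℕ) (g : ℕ → ℝ) (s : ι → ℝ) (J : ι) : ℕ :=
  sInf {z | 1 ≤ z ∧ z ≤ m ∧ s J ≤ g z}

/-- Total size of a finite set of jobs. -/
def Ssum (s : ι → ℝ) (W : Finset ι) : ℝ := ∑ J ∈ W, s J

/-- `k0f X`: the highest-indexed exact machine type among the jobs of `X`. -/
def k0f (m : ℕ) (g : ℕ → ℝ) (s : ι → ℝ) (X : Finset ι) : ℕ :=
  X.sup (fun J => mty m g s J)

/-- `H z X`: the jobs of `X` whose exact machine type lies in the tree rooted at `z`. -/
def H (m : ℕ) (g r : ℕ → ℝ) (s : ι → ℝ) (z : ℕ) (X : Finset ι) : Finset ι :=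
  X.filter (fun J => mty m g s J ∈ A m g r z)

/-- `SH X z := S(H_z(X))`. -/
def SH (m : ℕ) (g r : ℕ → ℝ) (s : ι → ℝ) (X : Finset ι) (z : ℕ) : ℝ :=
  Ssum s (H m g r s z X)

/-- Feasibility of a machine configuration `w : M → ℕ` for the job set `X`. -/
def Feasible (m : ℕ) (g : ℕ → ℝ) (s : ι → ℝ) (X : Finset ι) (w : ℕ → ℕ) : Prop :=
  ∀ i, 1 ≤ i → i ≤ m →
    Ssum s (X.filter (fun J => i ≤ mty m g s J)) ≤ ∑ z ∈ Finset.Icc i m, (w z : ℝ) * g z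

/-- The cost of a machine configuration. -/
def cost (m : ℕ) (r : ℕ → ℝ) (w : ℕ → ℕ) : ℝ :=
  ∑ z ∈ Finset.Icc 1 m, (w z : ℝ) * r z

/-- The optimal one-shot scheduling cost for a job set `X`. -/
def OPT1 (m : ℕ) (g r : ℕ → ℝ) (s : ι → ℝ) (X : Finset ι) : ℝ :=
  sInf {c : ℝ | ∃ w : ℕ → ℕ, Feasible m g s X w ∧ c = cost m r w}

/-- The fractional machine configuration `cn_{z*}` for the job set `X`, with
highest-indexed machine type `zs`.  A node `i ∈ T(zs) \ {zs}` is the boundary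
type `i*` exactly when `∑_{z ∈ T(zs), z > i} S(H_z) ≤ cn(zs)·g(zs) <
∑_{z ∈ T(zs), z ≥ i} S(H_z)`; nodes above the boundary get `0`,
nodes below it get `S(H_i)/g_i`. -/
def cn (m : ℕ) (g r : ℕ → ℝ) (s : ι → ℝ) (X : Finset ι) (zs i : ℕ) : ℝ :=
  let B : ℝ := (⌈SH m g r s X zs / g zs⌉₊ : ℝ) * g zs
  let Sge : ℝ := ∑ z ∈ (TIcc m g r zs).filter (fun z => i ≤ z), SH m g r s X z
  let Sgt : ℝ := ∑ z ∈ (TIcc m g r zs).filter (fun z => i < z), SH m g r s X z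
  if i = zs then (⌈SH m g r s X zs / g zs⌉₊ : ℝ)
  else if i ∈ T m g r zs then
    (if Sgt ≤ B ∧ B < Sge then (Sge - B) / g i
     else if B < Sgt then SH m g r s X i / g i
     else 0)
  else 0

/-- `cn_{zs}` is decent: for every strict ancestor `zt` of `zs`, the total cost of
the machines of types in `T(zs) ∩ A(zt)` is at most the cost of one type-`zt` machine. -/
def decent (m : ℕ) (g r : ℕ → ℝ) (s : ι → ℝ) (X : Finset ι) (zs : ℕ) : Prop :=
  ∀ zt ∈ P m g r zs, zt ≠ zs →
    (∑ z ∈ (TIcc m g r zs).filter (fun z => z ∈ A m g r zt), cn m g r s X zs z * r z) ≤ r zt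

/-- `z⋄(X)`: the least `z* ∈ P(k0(X))` such that `cn_{z*}` is decent. -/
def zdia (m : ℕ) (g r : ℕ → ℝ) (s : ι → ℝ) (X : Finset ι) : ℕ :=
  sInf {zs | zs ∈ P m g r (k0f m g s X) ∧ decent m g r s X zs}

/-- The child of `zd` whose subtree contains node `k`. -/
def chil (m : ℕ) (g r : ℕ → ℝ) (zd k : ℕ) : ℕ :=
  sInf {i | p m g r i = zd ∧ k ∈ A m g r i}

/-- The node `i ∈ T(zd)` whose subtree contains node `k`. -/
def idxT (m : ℕ) (g r : ℕ → ℝ) (zd k : ℕ) : ℕ :=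
  sInf {i | i ∈ T m g r zd ∧ k ∈ A m g r i}

/-- The children `f(zd)` of node `zd`, as a `Finset`. -/
def fchFin (m : ℕ) (g r : ℕ → ℝ) (zd : ℕ) : Finset ℕ :=
  (Finset.Icc 1 m).filter (fun z => p m g r z = zd)

/-- The cost `r̃(X)(J)` charged to the job `J` of the job set `X`. -/
def charge (m : ℕ) (g r : ℕ → ℝ) (s : ι → ℝ) (X : Finset ι) (J : ι) : ℝ :=
  let zd := zdia m g r s X
  let ρ : ℕ → ℝ := fun i => r i / g i
  let Hh := X.filter (fun J' => mty m g s J' = zd)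
  let c : ℝ := Ssum s Hh * ρ zd + ∑ i ∈ fchFin m g r zd, SH m g r s X i * ρ i
  if mty m g s J ∈ A m g r zd then
    if g zd ≤ SH m g r s X zd then s J * ρ zd
    else if r zd < c then
      if mty m g s J = zd then s J * ρ zd
      else
        s J * (ρ (chil m g r zd (mty m g s J)) -
          (ρ (chil m g r zd (mty m g s J)) - ρ zd) *
            ((c - r zd) /
              (∑ i ∈ fchFin m g r zd, ∑ J' ∈ H m g r s i X, s J' * (ρ i - ρ zd))))
    else
      if mty m g s J = zd then s J * ρ zd * (1 + (r zd - c) / (Ssum s Hh * ρ zd))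
      else s J * ρ (chil m g r zd (mty m g s J))
  else s J * ρ (idxT m g r zd (mty m g s J))

/-! ### Jobs with active intervals -/

/-- `span(X) := ⋃_{J ∈ X} [Ilo J, Ihi J)`. -/
def spanSet (Ilo Ihi : ι → ℝ) (X : Finset ι) : Set ℝ :=
  ⋃ J ∈ X, Set.Ico (Ilo J) (Ihi J)

/-- `X(t)`: the jobs of `X` active at time `t`. -/
def activeJ (Ilo Ihi : ι → ℝ) (X : Finset ι) (t : ℝ) : Finset ι :=
  X.filter (fun J => Ilo J ≤ t ∧ t < Ihi J)

/-- `X(t) ∪ ℋ(t)` where `ℋ = {F_d(J) : J ∈ X}`: the original jobs are embedded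
via `Sum.inl`, and the artificial job `F_d(J)` (with size `s J` and active set
`[Ihi J, Ihi J + d) ∩ span(X)`) is represented by `Sum.inr J`. -/
def activeJH (Ilo Ihi : ι → ℝ) (X : Finset ι) (d t : ℝ) : Finset (ι ⊕ ι) :=
  (X.image Sum.inl ∪ X.image Sum.inr).filter
    (fun x => Sum.elim
      (fun J => Ilo J ≤ t ∧ t < Ihi J)
      (fun J => (Ihi J ≤ t ∧ t < Ihi J + d) ∧ t ∈ spanSet Ilo Ihi X) x)

end

end BSHM

namespace BSHM

/-- The consequences of the standing assumptions on capacities and cost rates that the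
proofs rely on. -/
structure Valid (m : ℕ) (g r : ℕ → ℝ) : Prop where
  g_pos : ∀ i, 1 ≤ i → i ≤ m → 0 < g i
  r_pos : ∀ i, 1 ≤ i → i ≤ m → 0 < r i

section Forest

variable {m : ℕ} {g r : ℕ → ℝ}

lemma p_mem {i : ℕ} (h : pdef m g r i) :
    p m g r i ≤ m ∧ i < p m g r i ∧ r (p m g r i) / g (p m g r i) < r i / g i :=
  Nat.sInf_mem h

lemma p_le {i j : ℕ} (hj : j ≤ m) (hij : i < j) (hρ : r j / g j < r i / g i) :
    pdef m g r i ∧ p m g r i ≤ j :=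
  ⟨⟨j, hj, hij, hρ⟩, Nat.sInf_le ⟨hj, hij, hρ⟩⟩

lemma p_eq_zero {i : ℕ} (h : ¬ pdef m g r i) : p m g r i = 0 := by
  have : pset m g r i = ∅ := Set.not_nonempty_iff_eq_empty.mp h
  simp [p, this]

lemma le_of_lt_p {i j : ℕ} (h : pdef m g r i) (hij : i < j) (hj : j < p m g r i) :
    r i / g i ≤ r j / g j := by
  by_contra! hc
  have := p_le (hj.le.trans (p_mem h).1) hij hc
  omega

/-- The ancestors of `k` are the strict prefix minima of the normalized cost rate from `k` on. -/
lemma mem_P_iff {k z : ℕ} (hk : k ≤ m) :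
    z ∈ P m g r k ↔ k ≤ z ∧ z ≤ m ∧ ∀ j, k ≤ j → j < z → r z / g z < r j / g j := by
  constructor
  · intro h
    induction (show Relation.ReflTransGen (pstep m g r) k z from h) with
    | refl => exact ⟨le_rfl, hk, fun j h1 h2 => by omega⟩
    | @tail b c h1 h2 ih =>
      obtain ⟨hd, rfl⟩ := h2
      obtain ⟨h3, h4, h5⟩ := ih h1
      obtain ⟨h6, h7, h8⟩ := p_mem hd
      refine ⟨by omega, h6, fun j hj1 hj2 => ?_⟩
      rcases lt_trichotomy j b with hjb | rfl | hjb
      · exact h8.trans (h5 j hj1 hjb)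
      · exact h8
      · exact h8.trans_le (le_of_lt_p hd hjb hj2)
  · rintro ⟨h1, h2, h3⟩
    induction hn : z - k using Nat.strong_induction_on generalizing k with
    | _ n ih =>
      rcases h1.eq_or_lt with rfl | h1
      · exact Relation.ReflTransGen.refl
      · obtain ⟨hd, hle⟩ := p_le h2 h1 (h3 k le_rfl h1)
        have h7 := (p_mem hd).2.1
        exact Relation.ReflTransGen.head ⟨hd, rfl⟩
          (ih (z - p m g r k) (by omega) (by omega) hle
            (fun j hj1 hj2 => h3 j (by omega) hj2) rfl)

lemma mem_A_iff {k z : ℕ} :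
    k ∈ A m g r z ↔
      1 ≤ k ∧ k ≤ z ∧ z ≤ m ∧ ∀ j, k ≤ j → j < z → r z / g z < r j / g j := by
  constructor
  · rintro ⟨h1, h2, h3⟩
    exact ⟨h1, (mem_P_iff h2).1 h3⟩
  · rintro ⟨h1, h2, h3, h4⟩
    exact ⟨h1, by omega, (mem_P_iff (by omega)).2 ⟨h2, h3, h4⟩⟩

/-- The set `T k` consists of the weak suffix minima of the normalized cost rate up to `k`. -/
lemma mem_T_iff {k i : ℕ} (hk1 : 1 ≤ k) (hk : k ≤ m) :
    i ∈ T m g r k ↔ 1 ≤ i ∧ i ≤ k ∧ ∀ j, i < j → j ≤ k → r i / g i ≤ r j / g j := by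
  have hT : i ∈ T m g r k ↔ i = k ∨ ∃ z ∈ P m g r k, i ∈ y m g r z := by
    simp [T]
  rw [hT]
  constructor
  · rintro (rfl | ⟨z, hz, h1, h2, h3, h4⟩)
    · exact ⟨hk1, le_rfl, fun j h1 h2 => by omega⟩
    · obtain ⟨hz1, hz2, hz3⟩ := (mem_P_iff hk).1 hz
      have key : ¬ (pdef m g r i ∧ p m g r i ≤ z) := by
        rintro ⟨hd, hle⟩
        have h5 := (p_mem hd).2.1
        by_cases hdz : pdef m g r z
        · have := (p_mem hdz).2.1
          omega
        · have := p_eq_zero hdz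
          omega
      refine ⟨h1, ?_, fun j hj1 hj2 => ?_⟩
      · by_contra! hc
        exact key (p_le hz2 h3 (hz3 i hc.le h3))
      · by_contra! hc
        obtain ⟨h5, h6⟩ := p_le (m := m) (by omega) hj1 hc
        exact key ⟨h5, by omega⟩
  · rintro ⟨h1, h2, h3⟩
    rcases h2.eq_or_lt with rfl | h2
    · exact Or.inl rfl
    right
    by_cases hd : pdef m g r i
    · obtain ⟨hq1, hq2, hq3⟩ := p_mem hd
      have hkq : k < p m g r i := by
        by_contra! hc
        exact absurd (h3 _ hq2 hc) (not_le.2 hq3)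
      let F := (Finset.Icc 1 m).filter (fun z => z ∈ P m g r k ∧ z < p m g r i)
      have hF : F.Nonempty :=
        ⟨k, by simpa [F] using ⟨⟨hk1, hk⟩, Relation.ReflTransGen.refl, hkq⟩⟩
      have hz := F.max'_mem hF
      have hmax := F.le_max'
      set z := F.max' hF with hzdef
      simp only [F, Finset.mem_filter, Finset.mem_Icc] at hz
      obtain ⟨⟨hz1, hz2⟩, hz3, hz4⟩ := hz
      have hz5 := ((mem_P_iff hk).1 hz3).1
      have hdz := p_le hq1 hz4 (hq3.trans_le (le_of_lt_p hd (by omega) hz4))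
      refine ⟨z, hz3, h1, by omega, by omega, ?_⟩
      by_contra hne
      have h9 := p_mem hdz.1
      have : p m g r z ∈ F := by
        simp only [F, Finset.mem_filter, Finset.mem_Icc]
        exact ⟨⟨by omega, h9.1⟩, Relation.ReflTransGen.tail hz3 ⟨hdz.1, rfl⟩, by omega⟩
      have := hmax _ this
      omega
    · let F := (Finset.Icc 1 m).filter (fun z => z ∈ P m g r k)
      have hF : F.Nonempty :=
        ⟨k, by simpa [F] using ⟨⟨hk1, hk⟩, Relation.ReflTransGen.refl⟩⟩
      have hz := F.max'_mem hF
      have hmax := F.le_max'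
      set z := F.max' hF with hzdef
      simp only [F, Finset.mem_filter, Finset.mem_Icc] at hz
      obtain ⟨⟨hz1, hz2⟩, hz3⟩ := hz
      have hz5 := ((mem_P_iff hk).1 hz3).1
      refine ⟨z, hz3, h1, by omega, by omega, ?_⟩
      rw [p_eq_zero hd]
      by_cases hdz : pdef m g r z
      · have h9 := p_mem hdz
        have : p m g r z ∈ F := by
          simp only [F, Finset.mem_filter, Finset.mem_Icc]
          exact ⟨⟨by omega, h9.1⟩, Relation.ReflTransGen.tail hz3 ⟨hdz, rfl⟩⟩
        have := hmax _ this
        omega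
      · rw [p_eq_zero hdz]

lemma mem_TIcc_iff {k i : ℕ} (hk1 : 1 ≤ k) (hk : k ≤ m) :
    i ∈ TIcc m g r k ↔ 1 ≤ i ∧ i ≤ k ∧ ∀ j, i < j → j ≤ k → r i / g i ≤ r j / g j := by
  rw [← mem_T_iff hk1 hk, TIcc, Finset.mem_filter, and_iff_right_iff_imp]
  intro h
  have := (mem_T_iff hk1 hk).1 h
  simp only [Finset.mem_insert, Finset.mem_Icc]
  omega

lemma mem_T_iff_mem_TIcc {k i : ℕ} (hk1 : 1 ≤ k) (hk : k ≤ m) :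
    i ∈ T m g r k ↔ i ∈ TIcc m g r k := by
  rw [mem_T_iff hk1 hk, mem_TIcc_iff hk1 hk]

/-- Every nonempty interval of machine types has a first minimizer of the normalized cost rate. -/
lemma exists_first_min (g r : ℕ → ℝ) {k b : ℕ} (hkb : k ≤ b) :
    ∃ i, k ≤ i ∧ i ≤ b ∧ (∀ j, k ≤ j → j < i → r i / g i < r j / g j) ∧
      ∀ j, i < j → j ≤ b → r i / g i ≤ r j / g j := by
  induction b, hkb using Nat.le_induction with
  | base => exact ⟨k, le_rfl, le_rfl, fun j _ _ => by omega, fun j _ _ => by omega⟩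
  | succ b hb ih =>
    obtain ⟨i, h1, h2, h3, h4⟩ := ih
    by_cases hc : r (b + 1) / g (b + 1) < r i / g i
    · refine ⟨b + 1, by omega, le_rfl, fun j hj1 hj2 => ?_, fun j _ _ => by omega⟩
      rcases lt_trichotomy j i with hji | rfl | hji
      · exact hc.trans (h3 j hj1 hji)
      · exact hc
      · exact hc.trans_le (h4 j hji (by omega))
    · refine ⟨i, h1, by omega, h3, fun j hj1 hj2 => ?_⟩
      rcases hj2.eq_or_lt with rfl | hj2
      · exact not_lt.1 hc
      · exact h4 j hj1 (by omega)

lemma idxT_mem {b k : ℕ} (hk : 1 ≤ k) (hkb : k ≤ b) (hb : b ≤ m) :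
    idxT m g r b k ∈ T m g r b ∧ k ∈ A m g r (idxT m g r b k) := by
  obtain ⟨i, h1, h2, h3, h4⟩ := exists_first_min g r hkb
  exact Nat.sInf_mem (s := {i | i ∈ T m g r b ∧ k ∈ A m g r i})
    ⟨i, (mem_T_iff (by omega) hb).2 ⟨by omega, h2, h4⟩,
      mem_A_iff.2 ⟨hk, h1, by omega, h3⟩⟩

lemma mem_fch_iff {i z : ℕ} (hz : 1 ≤ z) (hzm : z ≤ m) :
    p m g r i = z ↔ i < z ∧ r z / g z < r i / g i ∧
      ∀ j, i < j → j < z → r i / g i ≤ r j / g j := by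
  constructor
  · rintro rfl
    have hd : pdef m g r i := by
      by_contra hd
      rw [p_eq_zero hd] at hz
      omega
    exact ⟨(p_mem hd).2.1, (p_mem hd).2.2, fun j => le_of_lt_p hd⟩
  · rintro ⟨h1, h2, h3⟩
    obtain ⟨hd, hle⟩ := p_le hzm h1 h2
    refine le_antisymm hle ?_
    by_contra! hc
    exact absurd (h3 _ (p_mem hd).2.1 hc) (not_le.2 (p_mem hd).2.2)

lemma exists_child {z k : ℕ} (hk : k ∈ A m g r z) (hkz : k ≠ z) :
    ∃ i, p m g r i = z ∧ k ∈ A m g r i := by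
  obtain ⟨h1, h2, h3, h4⟩ := mem_A_iff.1 hk
  obtain ⟨i, hi1, hi2, hi3, hi4⟩ := exists_first_min g r (show k ≤ z - 1 by omega)
  exact ⟨i, (mem_fch_iff (by omega) h3).2
      ⟨by omega, h4 i hi1 (by omega), fun j hj1 hj2 => hi4 j hj1 (by omega)⟩,
    mem_A_iff.2 ⟨h1, hi1, by omega, hi3⟩⟩

lemma chil_mem {z k : ℕ} (hk : k ∈ A m g r z) (hkz : k ≠ z) :
    p m g r (chil m g r z k) = z ∧ k ∈ A m g r (chil m g r z k) :=
  Nat.sInf_mem (s := {i | p m g r i = z ∧ k ∈ A m g r i}) (exists_child hk hkz)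

lemma eq_of_common_child {z i i' k : ℕ} (hz : 1 ≤ z) (hzm : z ≤ m) (hi : p m g r i = z)
    (hi' : p m g r i' = z) (hk : k ∈ A m g r i) (hk' : k ∈ A m g r i') : i = i' := by
  wlog h : i < i' generalizing i i'
  · rcases lt_trichotomy i i' with h1 | h1 | h1
    · exact absurd h1 h
    · exact h1
    · exact (this hi' hi hk' hk h1).symm
  have h1 := (mem_fch_iff hz hzm).1 hi
  have h2 := (mem_fch_iff hz hzm).1 hi'
  have h3 := mem_A_iff.1 hk
  have h4 := mem_A_iff.1 hk'
  exact absurd (h1.2.2 i' h h2.1) (not_le.2 (h4.2.2.2 i h3.2.1 h))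

lemma A_child_subset {z i k : ℕ} (hz : 1 ≤ z) (hzm : z ≤ m) (hi : p m g r i = z)
    (hk : k ∈ A m g r i) : k ∈ A m g r z ∧ k ≠ z := by
  obtain ⟨h1, h2, h3⟩ := (mem_fch_iff hz hzm).1 hi
  obtain ⟨h4, h5, h6, h7⟩ := mem_A_iff.1 hk
  refine ⟨mem_A_iff.2 ⟨h4, by omega, hzm, fun j hj1 hj2 => ?_⟩, by omega⟩
  rcases lt_trichotomy j i with hji | rfl | hji
  · exact h2.trans (h7 j hj1 hji)
  · exact h2
  · exact h2.trans_le (h3 j hji hj2)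

/-- A node of `T b` covering `k` has the smallest normalized cost rate on `[k, b]`. -/
lemma rho_idxT_le {b k j : ℕ} (hk : 1 ≤ k) (hb : b ≤ m) (hkj : k ≤ j) (hjb : j ≤ b) :
    r (idxT m g r b k) / g (idxT m g r b k) ≤ r j / g j := by
  obtain ⟨h1, h2⟩ := idxT_mem (g := g) (r := r) hk (hkj.trans hjb) hb
  rw [mem_T_iff (by omega) hb] at h1
  rw [mem_A_iff] at h2
  rcases lt_trichotomy j (idxT m g r b k) with h | h | h
  · exact (h2.2.2.2 j hkj h).le
  · rw [← h]
  · exact h1.2.2 j h hjb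

/-- The child of `b` covering `k` has the smallest normalized cost rate on `[k, b)`. -/
lemma rho_chil_le {b k j : ℕ} (hk : k ∈ A m g r b) (hkj : k ≤ j) (hjb : j < b) :
    r (chil m g r b k) / g (chil m g r b k) ≤ r j / g j := by
  obtain ⟨h1, h2⟩ := chil_mem hk (by omega)
  obtain ⟨h3, h4, h5, h6⟩ := mem_A_iff.1 hk
  rw [mem_fch_iff (by omega) h5] at h1
  rw [mem_A_iff] at h2
  rcases lt_trichotomy j (chil m g r b k) with h | h | h
  · exact (h2.2.2.2 j hkj h).le
  · rw [← h]
  · exact h1.2.2 j h hjb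

end Forest

section Loads

variable {m : ℕ} {g r : ℕ → ℝ} {ι κ : Type*} {s : ι → ℝ} {s' : κ → ℝ}
  {X : Finset ι} {Y : Finset κ}

lemma mty_mem (hm : 1 ≤ m) {J : ι} (hJ : s J ≤ g m) :
    1 ≤ mty m g s J ∧ mty m g s J ≤ m ∧ s J ≤ g (mty m g s J) :=
  Nat.sInf_mem (s := {z | 1 ≤ z ∧ z ≤ m ∧ s J ≤ g z}) ⟨m, hm, le_rfl, hJ⟩

lemma lt_size_of_lt_mty {J : ι} {i : ℕ} (hi : 1 ≤ i) (him : i ≤ m) (h : i < mty m g s J) :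
    g i < s J := by
  by_contra! hc
  exact absurd (Nat.sInf_le (s := {z | 1 ≤ z ∧ z ≤ m ∧ s J ≤ g z}) ⟨hi, him, hc⟩) (not_le.2 h)

lemma SH_nonneg (hX : ∀ J ∈ X, 0 < s J ∧ s J ≤ g m) (z : ℕ) : 0 ≤ SH m g r s X z :=
  Finset.sum_nonneg fun J hJ => (hX J (Finset.mem_filter.1 hJ).1).1.le

lemma k0f_mem (hX : X.Nonempty) : ∃ J ∈ X, mty m g s J = k0f m g s X := by
  obtain ⟨J, hJ, h⟩ := Finset.exists_mem_eq_sup X hX (fun J => mty m g s J)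
  exact ⟨J, hJ, h.symm⟩

lemma mty_le_k0f {J : ι} (hJ : J ∈ X) : mty m g s J ≤ k0f m g s X :=
  Finset.le_sup (f := fun J => mty m g s J) hJ

/-- Serving a budget `b` greedily from the highest index downwards uses at most `b`. -/
lemma sum_greedy_le (F : Finset ℕ) (l : ℕ → ℝ) (hl : ∀ i ∈ F, 0 ≤ l i) {b : ℝ} (hb : 0 ≤ b) :
    ∑ i ∈ F, min (l i) (max 0 (b - ∑ z ∈ F.filter (fun z => i < z), l z)) ≤ b := by
  induction F using Finset.induction_on_min with
  | empty => simpa using hb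
  | insert a F ha ih =>
    have haF : a ∉ F := fun h => lt_irrefl _ (ha a h)
    have ih := ih fun i hi => hl i (Finset.mem_insert_of_mem hi)
    have h1 : ∀ i ∈ F, (insert a F).filter (fun z => i < z) = F.filter (fun z => i < z) := by
      intro i hi
      rw [Finset.filter_insert, if_neg (not_lt.2 (ha i hi).le)]
    have h2 : (insert a F).filter (fun z => a < z) = F := by
      rw [Finset.filter_insert, if_neg (lt_irrefl a), Finset.filter_true_of_mem ha]
    have h4 : ∑ i ∈ F, min (l i)
          (max 0 (b - ∑ z ∈ (insert a F).filter (fun z => i < z), l z)) =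
        ∑ i ∈ F, min (l i) (max 0 (b - ∑ z ∈ F.filter (fun z => i < z), l z)) :=
      Finset.sum_congr rfl fun i hi => by rw [h1 i hi]
    rw [Finset.sum_insert haF, h2, h4]
    have h3 : ∑ i ∈ F, min (l i) (max 0 (b - ∑ z ∈ F.filter (fun z => i < z), l z)) ≤
        ∑ i ∈ F, l i := Finset.sum_le_sum fun i _ => min_le_left _ _
    rcases le_total 0 (b - ∑ i ∈ F, l i) with h | h
    · rw [max_eq_right h]
      linarith [min_le_right (l a) (b - ∑ i ∈ F, l i)]
    · rw [max_eq_left h]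
      linarith [min_le_right (l a) 0]

lemma sum_T_ge (m : ℕ) (g r : ℕ → ℝ) (l : ℕ → ℝ) {zs i : ℕ} (hi : i ∈ TIcc m g r zs) :
    ∑ z ∈ (TIcc m g r zs).filter (fun z => i ≤ z), l z =
      l i + ∑ z ∈ (TIcc m g r zs).filter (fun z => i < z), l z := by
  have : (TIcc m g r zs).filter (fun z => i ≤ z) =
      insert i ((TIcc m g r zs).filter (fun z => i < z)) := by
    ext z
    simp only [Finset.mem_filter, Finset.mem_insert]
    constructor
    · rintro ⟨h1, h2⟩
      rcases h2.eq_or_lt with h | h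
      · exact Or.inl h.symm
      · exact Or.inr ⟨h1, h⟩
    · rintro (rfl | ⟨h1, h2⟩)
      · exact ⟨hi, le_rfl⟩
      · exact ⟨h1, h2.le⟩
  rw [this, Finset.sum_insert (by simp)]

/-- Away from its top type, `cn` covers what the top machines leave uncovered. -/
lemma cn_mul_g (hV : Valid m g r) (hX : ∀ J ∈ X, 0 < s J ∧ s J ≤ g m) {zs i : ℕ}
    (h1 : 1 ≤ zs) (hm : zs ≤ m) (hi : i ∈ TIcc m g r zs) (hne : i ≠ zs) :
    cn m g r s X zs i * g i = SH m g r s X i - min (SH m g r s X i) (max 0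
      ((⌈SH m g r s X zs / g zs⌉₊ : ℝ) * g zs -
        ∑ z ∈ (TIcc m g r zs).filter (fun z => i < z), SH m g r s X z)) := by
  have hgi : g i ≠ 0 := by
    have := (mem_TIcc_iff h1 hm).1 hi
    exact (hV.g_pos i (by omega) (by omega)).ne'
  have hl := SH_nonneg (r := r) hX i
  simp only [cn]
  rw [if_neg hne, if_pos ((mem_T_iff_mem_TIcc h1 hm).2 hi), sum_T_ge m g r _ hi]
  generalize ((⌈SH m g r s X zs / g zs⌉₊ : ℝ) * g zs) = B
  generalize ∑ z ∈ (TIcc m g r zs).filter (fun z => i < z), SH m g r s X z = D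
  generalize SH m g r s X i = l at *
  split_ifs with ha hb
  · rw [div_mul_cancel₀ _ hgi, max_eq_right (by linarith), min_eq_right (by linarith)]
    ring
  · rw [div_mul_cancel₀ _ hgi, max_eq_left (by linarith), min_eq_right hl]
    ring
  · have hc : l ≤ B - D := by
      by_contra! hc
      exact ha ⟨not_lt.1 hb, by linarith⟩
    rw [min_eq_left (hc.trans (le_max_right _ _))]
    ring

lemma cn_top (m : ℕ) (g r : ℕ → ℝ) (s : ι → ℝ) (X : Finset ι) (zs : ℕ) :
    cn m g r s X zs zs = (⌈SH m g r s X zs / g zs⌉₊ : ℝ) := by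
  simp [cn]

/-- The types that contribute to the decency condition of `zs` at its ancestor `zt`. -/
noncomputable abbrev localT (m : ℕ) (g r : ℕ → ℝ) (zs zt : ℕ) : Finset ℕ :=
  (TIcc m g r zs).filter (fun z => z ∈ A m g r zt)

lemma top_mem_localT {zs zt : ℕ} (h1 : 1 ≤ zs) (hm : zs ≤ m) (hzt : zt ∈ P m g r zs) :
    zs ∈ localT m g r zs zt :=
  Finset.mem_filter.2 ⟨(mem_TIcc_iff h1 hm).2 ⟨h1, le_rfl, fun j _ _ => by omega⟩,
    h1, hm, hzt⟩

lemma cost_eq (hV : Valid m g r) {zs zt i : ℕ} (h1 : 1 ≤ zs) (hm : zs ≤ m)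
    (hi : i ∈ localT m g r zs zt) :
    cn m g r s X zs i * r i = cn m g r s X zs i * g i * (r i / g i) := by
  have := (mem_TIcc_iff h1 hm).1 (Finset.mem_filter.1 hi).1
  have := (hV.g_pos i (by omega) (by omega)).ne'
  field_simp

lemma rho_pos (hV : Valid m g r) {i : ℕ} (h1 : 1 ≤ i) (hm : i ≤ m) : 0 < r i / g i :=
  div_pos (hV.r_pos i h1 hm) (hV.g_pos i h1 hm)

lemma localT_bounds {zs zt i : ℕ} (h1 : 1 ≤ zs) (hm : zs ≤ m) (hi : i ∈ localT m g r zs zt) :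
    i ∈ TIcc m g r zs ∧ 1 ≤ i ∧ i ≤ zs := by
  have h := (Finset.mem_filter.1 hi).1
  have := (mem_TIcc_iff h1 hm).1 h
  exact ⟨h, this.1, this.2.1⟩

lemma SH_le_ceil (hV : Valid m g r) {zs : ℕ} (h1 : 1 ≤ zs) (hm : zs ≤ m) :
    SH m g r s X zs ≤ (⌈SH m g r s X zs / g zs⌉₊ : ℝ) * g zs :=
  (div_le_iff₀ (hV.g_pos zs h1 hm)).1 (Nat.le_ceil _)

/-- The local cost of `cn` is at least that of the fully fractional configuration. -/
lemma fractional_le_cost (hV : Valid m g r) (hX : ∀ J ∈ X, 0 < s J ∧ s J ≤ g m) {zs zt : ℕ}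
    (h1 : 1 ≤ zs) (hm : zs ≤ m) (hzt : zt ∈ P m g r zs) :
    ∑ z ∈ localT m g r zs zt, SH m g r s X z * (r z / g z) ≤
      ∑ z ∈ localT m g r zs zt, cn m g r s X zs z * r z := by
  have htop := top_mem_localT h1 hm hzt
  rw [Finset.sum_congr rfl fun i hi => cost_eq (s := s) (X := X) hV h1 hm hi,
    ← Finset.add_sum_erase _ _ htop, ← Finset.add_sum_erase _ _ htop, cn_top]
  set B := (⌈SH m g r s X zs / g zs⌉₊ : ℝ) * g zs with hB
  set F := (TIcc m g r zs).erase zs with hF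
  have hBS : SH m g r s X zs ≤ B := SH_le_ceil hV h1 hm
  let tk : ℕ → ℝ := fun i => min (SH m g r s X i)
    (max 0 (B - ∑ z ∈ (TIcc m g r zs).filter (fun z => i < z), SH m g r s X z))
  have htk0 : ∀ i, 0 ≤ tk i := fun i => le_min (SH_nonneg hX i) (le_max_left _ _)
  have hsplit : ∀ i ∈ F, ∑ z ∈ (TIcc m g r zs).filter (fun z => i < z), SH m g r s X z =
      SH m g r s X zs + ∑ z ∈ F.filter (fun z => i < z), SH m g r s X z := by
    intro i hi
    rw [hF, Finset.mem_erase] at hi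
    have := (mem_TIcc_iff h1 hm).1 hi.2
    rw [hF, Finset.filter_erase, Finset.add_sum_erase]
    exact Finset.mem_filter.2 ⟨(Finset.mem_filter.1 htop).1, by omega⟩
  have hgreedy : ∑ i ∈ F, tk i ≤ B - SH m g r s X zs := by
    refine le_of_eq_of_le (Finset.sum_congr rfl fun i hi => ?_)
      (sum_greedy_le F (SH m g r s X) (fun i _ => SH_nonneg hX i) (sub_nonneg.2 hBS))
    simp only [tk]
    rw [hsplit i hi, sub_add_eq_sub_sub]
  have hsub : (localT m g r zs zt).erase zs ⊆ F :=
    Finset.erase_subset_erase _ (Finset.filter_subset _ _)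
  have hlocal : ∑ i ∈ (localT m g r zs zt).erase zs, tk i * (r i / g i) ≤
      (B - SH m g r s X zs) * (r zs / g zs) := by
    calc ∑ i ∈ (localT m g r zs zt).erase zs, tk i * (r i / g i)
        ≤ ∑ i ∈ (localT m g r zs zt).erase zs, tk i * (r zs / g zs) := by
          refine Finset.sum_le_sum fun i hi => mul_le_mul_of_nonneg_left ?_ (htk0 i)
          rw [Finset.mem_erase] at hi
          have := (mem_TIcc_iff h1 hm).1 (Finset.mem_filter.1 hi.2).1
          exact this.2.2 zs (by omega) le_rfl
      _ = (∑ i ∈ (localT m g r zs zt).erase zs, tk i) * (r zs / g zs) :=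
          (Finset.sum_mul _ _ _).symm
      _ ≤ (B - SH m g r s X zs) * (r zs / g zs) :=
          mul_le_mul_of_nonneg_right
            ((Finset.sum_le_sum_of_subset_of_nonneg hsub fun i _ _ => htk0 i).trans hgreedy)
            (rho_pos hV h1 hm).le
  have hres : ∑ i ∈ (localT m g r zs zt).erase zs, cn m g r s X zs i * g i * (r i / g i) =
      ∑ i ∈ (localT m g r zs zt).erase zs, SH m g r s X i * (r i / g i) -
        ∑ i ∈ (localT m g r zs zt).erase zs, tk i * (r i / g i) := by
    rw [← Finset.sum_sub_distrib]
    refine Finset.sum_congr rfl fun i hi => ?_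
    rw [Finset.mem_erase] at hi
    rw [cn_mul_g hV hX h1 hm (Finset.mem_filter.1 hi.2).1 hi.1]
    simp only [tk, hB]
    ring
  rw [hres]
  linarith

lemma cost_le_fractional (hV : Valid m g r) (hX : ∀ J ∈ X, 0 < s J ∧ s J ≤ g m) {zs zt : ℕ}
    (h1 : 1 ≤ zs) (hm : zs ≤ m) (hzt : zt ∈ P m g r zs) :
    ∑ z ∈ localT m g r zs zt, cn m g r s X zs z * r z ≤
      (⌈SH m g r s X zs / g zs⌉₊ : ℝ) * g zs * (r zs / g zs) +
        ∑ z ∈ (localT m g r zs zt).erase zs, SH m g r s X z * (r z / g z) := by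
  rw [Finset.sum_congr rfl fun i hi => cost_eq (s := s) (X := X) hV h1 hm hi,
    ← Finset.add_sum_erase _ _ (top_mem_localT h1 hm hzt), cn_top]
  gcongr with i hi
  · rw [Finset.mem_erase] at hi
    have := localT_bounds h1 hm hi.2
    exact (rho_pos hV this.2.1 (by omega)).le
  · rw [Finset.mem_erase] at hi
    rw [cn_mul_g hV hX h1 hm (Finset.mem_filter.1 hi.2).1 hi.1]
    linarith [le_min (SH_nonneg (r := r) hX i) (le_max_left 0
      ((⌈SH m g r s X zs / g zs⌉₊ : ℝ) * g zs -
        ∑ z ∈ (TIcc m g r zs).filter (fun z => i < z), SH m g r s X z))]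

lemma cost_mono_of_ceil_eq (hV : Valid m g r) (hX : ∀ J ∈ X, 0 < s J ∧ s J ≤ g m)
    (hY : ∀ J ∈ Y, 0 < s' J ∧ s' J ≤ g m) (hXY : ∀ z, SH m g r s X z ≤ SH m g r s' Y z)
    {zs zt : ℕ} (h1 : 1 ≤ zs) (hm : zs ≤ m)
    (hN : ⌈SH m g r s X zs / g zs⌉₊ = ⌈SH m g r s' Y zs / g zs⌉₊) :
    ∑ z ∈ localT m g r zs zt, cn m g r s X zs z * r z ≤
      ∑ z ∈ localT m g r zs zt, cn m g r s' Y zs z * r z := by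
  refine Finset.sum_le_sum fun i hi => ?_
  rw [cost_eq hV h1 hm hi, cost_eq hV h1 hm hi]
  have hb := localT_bounds h1 hm hi
  refine mul_le_mul_of_nonneg_right ?_ (rho_pos hV hb.2.1 (by omega)).le
  by_cases hne : i = zs
  · subst hne
    rw [cn_top, cn_top, hN]
  · rw [cn_mul_g hV hX h1 hm hb.1 hne, cn_mul_g hV hY h1 hm hb.1 hne, hN]
    have hD : ∑ z ∈ (TIcc m g r zs).filter (fun z => i < z), SH m g r s X z ≤
        ∑ z ∈ (TIcc m g r zs).filter (fun z => i < z), SH m g r s' Y z :=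
      Finset.sum_le_sum fun z _ => hXY z
    have hl := hXY i
    have hl0 := SH_nonneg (r := r) hX i
    generalize (⌈SH m g r s' Y zs / g zs⌉₊ : ℝ) * g zs = B
    generalize ∑ z ∈ (TIcc m g r zs).filter (fun z => i < z), SH m g r s X z = D at *
    generalize ∑ z ∈ (TIcc m g r zs).filter (fun z => i < z), SH m g r s' Y z = D' at *
    generalize SH m g r s X i = l at *
    generalize SH m g r s' Y i = l' at *
    rcases min_cases l (max 0 (B - D)) with h | h <;>
    rcases min_cases l' (max 0 (B - D')) with h' | h' <;>
    rcases max_cases 0 (B - D) with k | k <;>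
    rcases max_cases 0 (B - D') with k' | k' <;>
    linarith [h.1, h'.1, k.1, k'.1, h.2, h'.2, k.2, k'.2]

lemma zdia_mem (hm : 1 ≤ m) (hX : ∀ J ∈ X, 0 < s J ∧ s J ≤ g m) (hne : X.Nonempty) :
    zdia m g r s X ∈ P m g r (k0f m g s X) ∧ decent m g r s X (zdia m g r s X) := by
  obtain ⟨J, hJ, hJk⟩ := k0f_mem (m := m) (g := g) (s := s) hne
  obtain ⟨h1, h2, h3⟩ := mty_mem hm (hX J hJ).2
  rw [hJk] at h1 h2
  refine Nat.sInf_mem (s := {zs | zs ∈ P m g r (k0f m g s X) ∧ decent m g r s X zs}) ?_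
  obtain ⟨z, hz1, hz2, hz3, hz4⟩ := exists_first_min g r h2
  refine ⟨z, (mem_P_iff h2).2 ⟨hz1, hz2, hz3⟩, fun zt hzt hzne => ?_⟩
  have h := (mem_P_iff hz2).1 hzt
  have h5 := hz4 zt (by omega) h.2.1
  exact absurd (h.2.2 z le_rfl (by omega)) (not_lt.2 h5)

lemma k0f_bounds (hm : 1 ≤ m) (hX : ∀ J ∈ X, 0 < s J ∧ s J ≤ g m) (hne : X.Nonempty) :
    1 ≤ k0f m g s X ∧ k0f m g s X ≤ m := by
  obtain ⟨J, hJ, hJk⟩ := k0f_mem (m := m) (g := g) (s := s) hne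
  obtain ⟨h1, h2, h3⟩ := mty_mem hm (hX J hJ).2
  omega

lemma zdia_bounds (hm : 1 ≤ m) (hX : ∀ J ∈ X, 0 < s J ∧ s J ≤ g m) (hne : X.Nonempty) :
    k0f m g s X ≤ zdia m g r s X ∧ zdia m g r s X ≤ m := by
  have h := (mem_P_iff (k0f_bounds hm hX hne).2).1 (zdia_mem (r := r) hm hX hne).1
  exact ⟨h.1, h.2.1⟩

/-- Enlarging the job set can only raise the selected machine type. -/
lemma zdia_mono (hm : 1 ≤ m) (hV : Valid m g r) (hX : ∀ J ∈ X, 0 < s J ∧ s J ≤ g m)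
    (hY : ∀ J ∈ Y, 0 < s' J ∧ s' J ≤ g m) (hXne : X.Nonempty) (hYne : Y.Nonempty)
    (hXY : ∀ z, SH m g r s X z ≤ SH m g r s' Y z) (hk : k0f m g s X ≤ k0f m g s' Y) :
    zdia m g r s X ≤ zdia m g r s' Y := by
  obtain ⟨hbP, hbd⟩ := zdia_mem (r := r) hm hY hYne
  obtain ⟨hb1, hb2⟩ := zdia_bounds (r := r) hm hY hYne
  obtain ⟨hk1, hk2⟩ := k0f_bounds hm hX hXne
  obtain ⟨JY, hJY, hJYk⟩ := k0f_mem (m := m) (g := g) (s := s') hYne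
  have hkY := k0f_bounds hm hY hYne
  set b := zdia m g r s' Y
  set kX := k0f m g s X
  obtain ⟨hi1, hi2⟩ := idxT_mem (g := g) (r := r) hk1 (hk.trans hb1) hb2
  set i := idxT m g r b kX
  rw [mem_T_iff (by omega) hb2] at hi1
  suffices hdec : decent m g r s X i from
    (Nat.sInf_le (s := {zs | zs ∈ P m g r kX ∧ decent m g r s X zs}) ⟨hi2.2.2, hdec⟩).trans hi1.2.1
  intro zt hzt hztne
  have him : i ≤ m := by omega
  rcases hi1.2.1.eq_or_lt with hib | hib
  · rw [hib] at hzt hztne ⊢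
    refine le_trans ?_ (hbd zt hzt hztne)
    have hgb := hV.g_pos b (by omega) hb2
    rcases (Nat.ceil_mono (div_le_div_of_nonneg_right (hXY b) hgb.le)).eq_or_lt with hN | hN
    · exact cost_mono_of_ceil_eq hV hX hY hXY (by omega) hb2 hN
    · refine (cost_le_fractional hV hX (by omega) hb2 hzt).trans
        (le_trans ?_ (fractional_le_cost hV hY (by omega) hb2 hzt))
      rw [← Finset.add_sum_erase _ _ (top_mem_localT (by omega) hb2 hzt)]
      have h2 := (lt_div_iff₀ hgb).1 (Nat.lt_ceil.1 hN)
      refine add_le_add (mul_le_mul_of_nonneg_right h2.le (rho_pos hV (by omega) hb2).le)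
        (Finset.sum_le_sum fun z hz => mul_le_mul_of_nonneg_right (hXY z) ?_)
      have := localT_bounds (by omega) hb2 (Finset.mem_erase.1 hz).2
      exact (rho_pos hV this.2.1 (by omega)).le
  · obtain ⟨hzt1, hzt2, hzt3⟩ := (mem_P_iff him).1 hzt
    have hbzt : b < zt := by
      by_contra! hc
      exact absurd (hi1.2.2 zt (by omega) hc) (not_le.2 (hzt3 i le_rfl (by omega)))
    have hztb : zt ∈ P m g r b :=
      (mem_P_iff hb2).2 ⟨hbzt.le, hzt2, fun j hj1 hj2 => hzt3 j (by omega) hj2⟩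
    refine (cost_le_fractional hV hX hi1.1 him hzt).trans
      (le_trans ?_ ((fractional_le_cost hV hY (by omega) hb2 hztb).trans (hbd zt hztb hbzt.ne')))
    have hkYi : i < k0f m g s' Y := by
      by_contra! hc
      have := ((mem_P_iff hkY.2).1 hbP).2.2 i hc hib
      exact absurd (hi1.2.2 b hib le_rfl) (not_le.2 this)
    have hbig : g i ≤ SH m g r s' Y b := by
      have h3 : g i < s' JY := lt_size_of_lt_mty hi1.1 him (hJYk ▸ hkYi)
      have h4 : JY ∈ H m g r s' b Y :=
        Finset.mem_filter.2 ⟨hJY, by rw [hJYk]; exact ⟨hkY.1, hkY.2, hbP⟩⟩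
      exact h3.le.trans (Finset.single_le_sum (f := s')
        (fun J hJ => (hY J (Finset.mem_filter.1 hJ).1).1.le) h4)
    have hgi := hV.g_pos i hi1.1 him
    have hceil : (⌈SH m g r s X i / g i⌉₊ : ℝ) * g i ≤ SH m g r s X i + g i := by
      have h5 := (Nat.ceil_lt_add_one (div_nonneg (SH_nonneg (r := r) hX i) hgi.le)).le
      have h6 := mul_le_mul_of_nonneg_right h5 hgi.le
      rwa [add_mul, div_mul_cancel₀ _ hgi.ne', one_mul] at h6
    have hsub : localT m g r i zt ⊆ (localT m g r b zt).erase b := by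
      intro z hz
      have hz' := (mem_TIcc_iff hi1.1 him).1 (Finset.mem_filter.1 hz).1
      refine Finset.mem_erase.2 ⟨by omega, Finset.mem_filter.2
        ⟨(mem_TIcc_iff (by omega) hb2).2 ⟨hz'.1, by omega, fun j hj1 hj2 => ?_⟩,
          (Finset.mem_filter.1 hz).2⟩⟩
      rcases le_or_gt j i with hji | hji
      · exact hz'.2.2 j hj1 hji
      · have hzi : r z / g z ≤ r i / g i := by
          rcases hz'.2.1.eq_or_lt with h | h
          · rw [h]
          · exact hz'.2.2 i h le_rfl
        exact hzi.trans (hi1.2.2 j hji hj2)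
    have hρ0 : ∀ z ∈ localT m g r b zt, 0 ≤ r z / g z := fun z hz => by
      have := localT_bounds (by omega) hb2 hz
      exact (rho_pos hV this.2.1 (by omega)).le
    have hsum : ∑ z ∈ localT m g r i zt, SH m g r s X z * (r z / g z) ≤
        ∑ z ∈ (localT m g r b zt).erase b, SH m g r s' Y z * (r z / g z) := by
      refine (Finset.sum_le_sum_of_subset_of_nonneg hsub fun z hz _ =>
        mul_nonneg (SH_nonneg hX z) (hρ0 z (Finset.mem_erase.1 hz).2)).trans
        (Finset.sum_le_sum fun z hz =>
          mul_le_mul_of_nonneg_right (hXY z) (hρ0 z (Finset.mem_erase.1 hz).2))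
    rw [← Finset.add_sum_erase _ _ (top_mem_localT hi1.1 him hzt)] at hsum
    rw [← Finset.add_sum_erase _ _ (top_mem_localT (by omega) hb2 hztb)]
    have hρi := rho_pos hV hi1.1 him
    have hρib := hi1.2.2 b hib le_rfl
    have h7 := mul_le_mul_of_nonneg_right hceil hρi.le
    have h8 : g i * (r i / g i) ≤ SH m g r s' Y b * (r b / g b) :=
      mul_le_mul hbig hρib hρi.le (hgi.le.trans hbig)
    rw [add_mul] at h7
    linarith

end Loads

section Charge

variable {m : ℕ} {g r : ℕ → ℝ} {ι κ : Type*} {s : ι → ℝ} {s' : κ → ℝ}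
  {X : Finset ι} {Y : Finset κ}

/-- The total size of the jobs whose exact machine type is `z`. -/
noncomputable def exactLoad (m : ℕ) (g : ℕ → ℝ) (s : ι → ℝ) (X : Finset ι) (z : ℕ) : ℝ :=
  Ssum s (X.filter (fun J => mty m g s J = z))

/-- The cost of the jobs of `H z X` when those below a child of `z` pay the rate of that child. -/
noncomputable def baseCost (m : ℕ) (g r : ℕ → ℝ) (s : ι → ℝ) (X : Finset ι) (z : ℕ) : ℝ :=
  exactLoad m g s X z * (r z / g z) + ∑ i ∈ fchFin m g r z, SH m g r s X i * (r i / g i)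

/-- The part of `baseCost` in excess of the rate of `z`. -/
noncomputable def excess (m : ℕ) (g r : ℕ → ℝ) (s : ι → ℝ) (X : Finset ι) (z : ℕ) : ℝ :=
  ∑ i ∈ fchFin m g r z, ∑ J ∈ H m g r s i X, s J * (r i / g i - r z / g z)

lemma charge_eq (m : ℕ) (g r : ℕ → ℝ) (s : ι → ℝ) (X : Finset ι) (J : ι) {z k : ℕ}
    (hz : zdia m g r s X = z) (hk : mty m g s J = k) :
    charge m g r s X J =
      if k ∈ A m g r z then
        if g z ≤ SH m g r s X z then s J * (r z / g z)
        else if r z < baseCost m g r s X z then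
          if k = z then s J * (r z / g z)
          else s J * (r (chil m g r z k) / g (chil m g r z k) -
            (r (chil m g r z k) / g (chil m g r z k) - r z / g z) *
              ((baseCost m g r s X z - r z) / excess m g r s X z))
        else
          if k = z then s J * (r z / g z) *
            (1 + (r z - baseCost m g r s X z) / (exactLoad m g s X z * (r z / g z)))
          else s J * (r (chil m g r z k) / g (chil m g r z k))
      else s J * (r (idxT m g r z k) / g (idxT m g r z k)) := by
  subst hz hk
  rfl

lemma excess_eq (m : ℕ) (g r : ℕ → ℝ) (s : ι → ℝ) (X : Finset ι) (z : ℕ) :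
    excess m g r s X z =
      ∑ i ∈ fchFin m g r z, SH m g r s X i * (r i / g i - r z / g z) :=
  Finset.sum_congr rfl fun _ _ => (Finset.sum_mul _ _ _).symm

/-- The jobs below `z` are those of exact type `z` and those below the children of `z`. -/
lemma SH_eq_exactLoad_add {z : ℕ} (hz : 1 ≤ z) (hzm : z ≤ m) :
    SH m g r s X z = exactLoad m g s X z + ∑ i ∈ fchFin m g r z, SH m g r s X i := by
  have hunion : H m g r s z X = X.filter (fun J => mty m g s J = z) ∪
      (fchFin m g r z).biUnion (fun i => H m g r s i X) := by
    ext J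
    simp only [H, fchFin, Finset.mem_union, Finset.mem_filter, Finset.mem_biUnion,
      Finset.mem_Icc]
    constructor
    · rintro ⟨h1, h2⟩
      by_cases h3 : mty m g s J = z
      · exact Or.inl ⟨h1, h3⟩
      · obtain ⟨i, hi1, hi2⟩ := exists_child h2 h3
        have := mem_A_iff.1 hi2
        exact Or.inr ⟨i, ⟨⟨by omega, by omega⟩, hi1⟩, h1, hi2⟩
    · rintro (⟨h1, h2⟩ | ⟨i, ⟨_, hi⟩, h1, h2⟩)
      · exact ⟨h1, by rw [h2, mem_A_iff]; exact ⟨hz, le_rfl, hzm, fun j _ _ => by omega⟩⟩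
      · exact ⟨h1, (A_child_subset hz hzm hi h2).1⟩
  have hdisj : Disjoint (X.filter (fun J => mty m g s J = z))
      ((fchFin m g r z).biUnion (fun i => H m g r s i X)) := by
    simp only [Finset.disjoint_left, H, fchFin, Finset.mem_filter, Finset.mem_biUnion]
    rintro J ⟨_, h1⟩ ⟨i, ⟨_, hi⟩, _, h2⟩
    exact (A_child_subset hz hzm hi h2).2 h1
  have hpair : ((fchFin m g r z : Finset ℕ) : Set ℕ).PairwiseDisjoint
      (fun i => H m g r s i X) := by
    intro i hi i' hi' hne
    simp only [Function.onFun, Finset.disjoint_left, H, Finset.mem_filter]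
    rintro J ⟨_, h1⟩ ⟨_, h2⟩
    simp only [fchFin, Finset.coe_filter, Set.mem_ofPred_eq] at hi hi'
    exact hne (eq_of_common_child hz hzm hi.2 hi'.2 h1 h2)
  rw [SH, Ssum, hunion, Finset.sum_union hdisj, Finset.sum_biUnion hpair]
  rfl

lemma baseCost_eq {z : ℕ} (hz : 1 ≤ z) (hzm : z ≤ m) :
    baseCost m g r s X z = excess m g r s X z + SH m g r s X z * (r z / g z) := by
  rw [baseCost, excess_eq, SH_eq_exactLoad_add hz hzm, add_mul, Finset.sum_mul]
  simp only [mul_sub, Finset.sum_sub_distrib]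
  ring

lemma r_eq (hV : Valid m g r) {z : ℕ} (hz : 1 ≤ z) (hzm : z ≤ m) : r z = g z * (r z / g z) := by
  have := (hV.g_pos z hz hzm).ne'
  field_simp

lemma rho_lt_child {z i : ℕ} (hz : 1 ≤ z) (hzm : z ≤ m) (hi : i ∈ fchFin m g r z) :
    r z / g z < r i / g i :=
  ((mem_fch_iff hz hzm).1 (Finset.mem_filter.1 hi).2).2.1

lemma rho_lt_chil {z k : ℕ} (hk : k ∈ A m g r z) (hkz : k ≠ z) :
    r z / g z < r (chil m g r z k) / g (chil m g r z k) := by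
  obtain ⟨h1, h2, h3, h4⟩ := mem_A_iff.1 hk
  exact ((mem_fch_iff (by omega) h3).1 (chil_mem hk hkz).1).2.1

/-- When the discount applies, it is the fraction `1 - (g z - S) * ρ z / excess` of the excess. -/
lemma discount_props (hV : Valid m g r) {z : ℕ} (hz : 1 ≤ z) (hzm : z ≤ m)
    (hfull : ¬ g z ≤ SH m g r s X z) (hc : r z < baseCost m g r s X z) :
    0 < excess m g r s X z ∧ 0 ≤ (baseCost m g r s X z - r z) / excess m g r s X z ∧
      (baseCost m g r s X z - r z) / excess m g r s X z ≤ 1 ∧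
      (baseCost m g r s X z - r z) / excess m g r s X z =
        1 - (g z - SH m g r s X z) * (r z / g z) / excess m g r s X z := by
  have hρ := rho_pos hV hz hzm
  have h1 := r_eq hV hz hzm
  have h2 := baseCost_eq (g := g) (r := r) (s := s) (X := X) hz hzm
  have h3 : 0 ≤ (g z - SH m g r s X z) * (r z / g z) :=
    mul_nonneg (by linarith) hρ.le
  have h4 : 0 < excess m g r s X z := by nlinarith
  refine ⟨h4, div_nonneg (by linarith) h4.le, (div_le_one h4).2 (by nlinarith), ?_⟩
  rw [eq_sub_iff_add_eq, ← add_div, div_eq_one_iff_eq h4.ne']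
  linarith

lemma exactLoad_nonneg (hX : ∀ J ∈ X, 0 < s J ∧ s J ≤ g m) (z : ℕ) :
    0 ≤ exactLoad m g s X z :=
  Finset.sum_nonneg fun J hJ => (hX J (Finset.mem_filter.1 hJ).1).1.le

lemma exactLoad_pos (hX : ∀ J ∈ X, 0 < s J ∧ s J ≤ g m) {J : ι} (hJ : J ∈ X) :
    0 < exactLoad m g s X (mty m g s J) :=
  Finset.sum_pos (fun J hJ => (hX J (Finset.mem_filter.1 hJ).1).1)
    ⟨J, Finset.mem_filter.2 ⟨hJ, rfl⟩⟩

/-- Jobs below the selected type pay at least its normalized rate. -/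
lemma le_charge_of_mem_A (hV : Valid m g r) (hX : ∀ J ∈ X, 0 < s J ∧ s J ≤ g m)
    {J : ι} (hJ : J ∈ X) {z : ℕ} (hz : zdia m g r s X = z) (hk : mty m g s J ∈ A m g r z) :
    s J * (r z / g z) ≤ charge m g r s X J := by
  have hs := (hX J hJ).1
  obtain ⟨h1, h2, h3, -⟩ := mem_A_iff.1 hk
  have hz1 : 1 ≤ z := by omega
  have hρ := rho_pos hV hz1 h3
  rw [charge_eq m g r s X J hz rfl, if_pos hk]
  split_ifs with hfull hc hkz hkz
  · exact le_rfl
  · exact le_rfl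
  · obtain ⟨-, -, h5, -⟩ := discount_props hV hz1 h3 hfull hc
    refine mul_le_mul_of_nonneg_left ?_ hs.le
    nlinarith [rho_lt_chil hk hkz]
  · have h5 : 0 ≤ (r z - baseCost m g r s X z) / (exactLoad m g s X z * (r z / g z)) :=
      div_nonneg (by linarith) (mul_nonneg (exactLoad_nonneg hX z) hρ.le)
    nlinarith [mul_nonneg (mul_pos hs hρ).le h5]
  · exact mul_le_mul_of_nonneg_left (rho_lt_chil hk hkz).le hs.le

/-- Jobs strictly below the selected type pay at most the rate of the child covering them. -/
lemma charge_le_of_mem_A (hV : Valid m g r) (hX : ∀ J ∈ X, 0 < s J ∧ s J ≤ g m)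
    {J : ι} (hJ : J ∈ X) {z : ℕ} (hz : zdia m g r s X = z) (hk : mty m g s J ∈ A m g r z)
    (hkz : mty m g s J ≠ z) :
    charge m g r s X J ≤
      s J * (r (chil m g r z (mty m g s J)) / g (chil m g r z (mty m g s J))) := by
  have hs := (hX J hJ).1
  obtain ⟨h1, h2, h3, -⟩ := mem_A_iff.1 hk
  have hz1 : 1 ≤ z := by omega
  have hlt := rho_lt_chil hk hkz
  rw [charge_eq m g r s X J hz rfl, if_pos hk, if_neg hkz, if_neg hkz]
  split_ifs with hfull hc
  · exact mul_le_mul_of_nonneg_left hlt.le hs.le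
  · obtain ⟨-, h5, -, -⟩ := discount_props hV hz1 h3 hfull hc
    refine mul_le_mul_of_nonneg_left ?_ hs.le
    nlinarith
  · exact le_rfl

lemma charge_nonneg (hm : 1 ≤ m) (hV : Valid m g r) (hX : ∀ J ∈ X, 0 < s J ∧ s J ≤ g m)
    {J : ι} (hJ : J ∈ X) : 0 ≤ charge m g r s X J := by
  have hs := (hX J hJ).1
  have hmt := mty_mem hm (hX J hJ).2
  obtain ⟨ha1, ha2⟩ := zdia_bounds (r := r) hm hX ⟨J, hJ⟩
  have hle := (mty_le_k0f (m := m) (g := g) (s := s) hJ).trans ha1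
  by_cases hk : mty m g s J ∈ A m g r (zdia m g r s X)
  · exact (mul_pos hs (rho_pos hV (by omega) ha2)).le.trans (le_charge_of_mem_A hV hX hJ rfl hk)
  · rw [charge_eq m g r s X J rfl rfl, if_neg hk]
    have h2 := mem_A_iff.1 (idxT_mem (g := g) (r := r) hmt.1 hle ha2).2
    exact (mul_pos hs (rho_pos hV (by omega) h2.2.2.1)).le

/-- With the same selected type, larger loads lower the charge of every job. -/
lemma charge_anti_of_zdia_eq (hV : Valid m g r)
    (hX : ∀ J ∈ X, 0 < s J ∧ s J ≤ g m) (hY : ∀ J ∈ Y, 0 < s' J ∧ s' J ≤ g m)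
    (hXY : ∀ z, SH m g r s X z ≤ SH m g r s' Y z)
    (hXYe : ∀ z, exactLoad m g s X z ≤ exactLoad m g s' Y z)
    {J : ι} {J' : κ} (hJ : J ∈ X) (hJ' : J' ∈ Y) (hs : s' J' = s J)
    (hmty : mty m g s' J' = mty m g s J) {z : ℕ}
    (hzX : zdia m g r s X = z) (hzY : zdia m g r s' Y = z) :
    charge m g r s' Y J' ≤ charge m g r s X J := by
  have hsJ := (hX J hJ).1
  by_cases hk : mty m g s J ∈ A m g r z
  swap
  · rw [charge_eq m g r s X J hzX rfl, charge_eq m g r s' Y J' hzY hmty, if_neg hk, if_neg hk, hs]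
  obtain ⟨h1, h2, h3, -⟩ := mem_A_iff.1 hk
  have hz1 : 1 ≤ z := by omega
  have hρ := rho_pos hV hz1 h3
  have hlow := le_charge_of_mem_A hV hX hJ hzX hk
  by_cases hfullY : g z ≤ SH m g r s' Y z
  · rwa [charge_eq m g r s' Y J' hzY hmty, if_pos hk, if_pos hfullY, hs]
  have hfullX : ¬ g z ≤ SH m g r s X z := fun h => hfullY (h.trans (hXY z))
  have hex : excess m g r s X z ≤ excess m g r s' Y z := by
    rw [excess_eq, excess_eq]
    exact Finset.sum_le_sum fun i hi =>
      mul_le_mul_of_nonneg_right (hXY i) (sub_nonneg.2 (rho_lt_child hz1 h3 hi).le)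
  have hbase : baseCost m g r s X z ≤ baseCost m g r s' Y z := by
    rw [baseCost_eq hz1 h3, baseCost_eq hz1 h3]
    exact add_le_add hex (mul_le_mul_of_nonneg_right (hXY z) hρ.le)
  by_cases hcY : r z < baseCost m g r s' Y z
  · by_cases hkz : mty m g s J = z
    · rwa [charge_eq m g r s' Y J' hzY hmty, if_pos hk, if_neg hfullY, if_pos hcY, if_pos hkz, hs]
    · have hlt := rho_lt_chil hk hkz
      obtain ⟨hY1, hY2, hY3, hY4⟩ := discount_props hV hz1 h3 hfullY hcY
      by_cases hcX : r z < baseCost m g r s X z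
      · obtain ⟨hX1, hX2, hX3, hX4⟩ := discount_props hV hz1 h3 hfullX hcX
        rw [charge_eq m g r s' Y J' hzY hmty, if_pos hk, if_neg hfullY, if_pos hcY, if_neg hkz, hs,
          charge_eq m g r s X J hzX rfl, if_pos hk, if_neg hfullX, if_pos hcX, if_neg hkz]
        have hα : (baseCost m g r s X z - r z) / excess m g r s X z ≤
            (baseCost m g r s' Y z - r z) / excess m g r s' Y z := by
          rw [hX4, hY4]
          have hnum : (g z - SH m g r s' Y z) * (r z / g z) ≤
              (g z - SH m g r s X z) * (r z / g z) :=
            mul_le_mul_of_nonneg_right (by linarith [hXY z]) hρ.le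
          have hnum0 : 0 ≤ (g z - SH m g r s X z) * (r z / g z) :=
            mul_nonneg (by linarith) hρ.le
          exact sub_le_sub_left (div_le_div₀ hnum0 hnum hX1 hex) 1
        refine mul_le_mul_of_nonneg_left ?_ hsJ.le
        exact sub_le_sub_left (mul_le_mul_of_nonneg_left hα (by linarith)) _
      · have := charge_le_of_mem_A hV hY hJ' hzY (hmty ▸ hk) (hmty ▸ hkz)
        rw [charge_eq m g r s X J hzX rfl, if_pos hk, if_neg hfullX, if_neg hcX, if_neg hkz]
        rwa [hmty, hs] at this
  · have hcX : ¬ r z < baseCost m g r s X z := fun h => hcY (h.trans_le hbase)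
    rw [charge_eq m g r s' Y J' hzY hmty, if_pos hk, if_neg hfullY, if_neg hcY, hs,
      charge_eq m g r s X J hzX rfl, if_pos hk, if_neg hfullX, if_neg hcX]
    split_ifs with hkz
    · have hpos : 0 < exactLoad m g s X z := hkz ▸ exactLoad_pos hX hJ
      refine mul_le_mul_of_nonneg_left ?_ (mul_pos hsJ hρ).le
      have := div_le_div₀ (by linarith) (sub_le_sub_left hbase (r z)) (mul_pos hpos hρ)
        (mul_le_mul_of_nonneg_right (hXYe z) hρ.le)
      linarith
    · exact le_rfl

/-- Charges can only drop when the job set is enlarged; the smaller set is compared through a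
size-preserving injection `e`. -/
lemma charge_anti (hm : 1 ≤ m) (hV : Valid m g r)
    (hX : ∀ J ∈ X, 0 < s J ∧ s J ≤ g m) (hY : ∀ J ∈ Y, 0 < s' J ∧ s' J ≤ g m)
    (e : ι → κ) (he : Set.InjOn e X) (heY : ∀ J ∈ X, e J ∈ Y) (hes : ∀ J, s' (e J) = s J)
    {J : ι} (hJ : J ∈ X) :
    charge m g r s' Y (e J) ≤ charge m g r s X J := by
  have hmty : ∀ J, mty m g s' (e J) = mty m g s J := fun J => by simp only [mty, hes]
  have hsum : ∀ q : ℕ → Prop, Ssum s (X.filter (fun J => q (mty m g s J))) ≤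
      Ssum s' (Y.filter (fun J => q (mty m g s' J))) := by
    intro q
    have h1 : Ssum s (X.filter (fun J => q (mty m g s J))) =
        Ssum s' ((X.filter (fun J => q (mty m g s J))).image e) := by
      rw [Ssum, Ssum, Finset.sum_image fun a ha b hb hab =>
        he (Finset.mem_filter.1 ha).1 (Finset.mem_filter.1 hb).1 hab]
      exact Finset.sum_congr rfl fun J _ => (hes J).symm
    rw [h1]
    refine Finset.sum_le_sum_of_subset_of_nonneg ?_
      fun J hJ _ => (hY J (Finset.mem_filter.1 hJ).1).1.le
    intro J' hJ'
    obtain ⟨J, hJ, rfl⟩ := Finset.mem_image.1 hJ'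
    rw [Finset.mem_filter] at hJ ⊢
    exact ⟨heY J hJ.1, (hmty J).symm ▸ hJ.2⟩
  have hXY : ∀ z, SH m g r s X z ≤ SH m g r s' Y z := fun z => hsum (· ∈ A m g r z)
  have hXYe : ∀ z, exactLoad m g s X z ≤ exactLoad m g s' Y z := fun z => by
    unfold exactLoad
    convert hsum (· = z)
  have hk0 : k0f m g s X ≤ k0f m g s' Y :=
    Finset.sup_le fun J hJ => (hmty J).symm.le.trans (mty_le_k0f (heY J hJ))
  have hXne : X.Nonempty := ⟨J, hJ⟩
  have hYne : Y.Nonempty := ⟨e J, heY J hJ⟩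
  have hab := zdia_mono hm hV hX hY hXne hYne hXY hk0
  rcases hab.eq_or_lt with hab | hab
  · exact charge_anti_of_zdia_eq hV hX hY hXY hXYe hJ (heY J hJ) (hes J) (hmty J) hab rfl
  obtain ⟨ha1, ha2⟩ := zdia_bounds (r := r) hm hX hXne
  obtain ⟨hb1, hb2⟩ := zdia_bounds (r := r) hm hY hYne
  have hsJ := (hX J hJ).1
  have hmt := mty_mem hm (hX J hJ).2
  have hka := (mty_le_k0f (m := m) (g := g) (s := s) hJ).trans ha1
  have hYrate : ∀ j, mty m g s J ≤ j → j < zdia m g r s' Y →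
      charge m g r s' Y (e J) ≤ s J * (r j / g j) := by
    intro j hj1 hj2
    by_cases hk : mty m g s J ∈ A m g r (zdia m g r s' Y)
    · have h5 := charge_le_of_mem_A hV hY (heY J hJ) rfl ((hmty J).symm ▸ hk)
        ((hmty J).symm ▸ (by omega))
      rw [hmty, hes] at h5
      exact h5.trans (mul_le_mul_of_nonneg_left (rho_chil_le hk hj1 hj2) hsJ.le)
    · rw [charge_eq m g r s' Y (e J) rfl (hmty J), if_neg hk, hes]
      exact mul_le_mul_of_nonneg_left (rho_idxT_le hmt.1 hb2 hj1 hj2.le) hsJ.le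
  by_cases hk : mty m g s J ∈ A m g r (zdia m g r s X)
  · exact (hYrate _ hka hab).trans (le_charge_of_mem_A hV hX hJ rfl hk)
  · rw [charge_eq m g r s X J rfl rfl, if_neg hk]
    obtain ⟨h1, h2⟩ := idxT_mem (g := g) (r := r) hmt.1 hka ha2
    rw [mem_T_iff (by omega) ha2] at h1
    rw [mem_A_iff] at h2
    exact hYrate _ h2.2.1 (by omega)

end Charge

section Integrals

/-- A function of a finite set varying measurably inside a fixed finite set, and empty outside a
set of finite measure, is integrable. -/
lemma integrable_comp_finset {κ : Type*} (U : Finset κ) (a : ℝ → Finset κ)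
    (hU : ∀ t, a t ⊆ U) (hmeas : ∀ x ∈ U, MeasurableSet {t | x ∈ a t})
    {K : Set ℝ} (hK : volume K < ⊤) (hempty : ∀ t, t ∉ K → a t = ∅)
    (G : Finset κ → ℝ) (hG : G ∅ = 0) : Integrable (fun t => G (a t)) := by
  have hlevel : ∀ W ∈ U.powerset, MeasurableSet {t | a t = W} := by
    intro W hW
    have : {t | a t = W} = ⋂ x ∈ U, {t | x ∈ a t ↔ x ∈ W} := by
      ext t
      simp only [Set.mem_ofPred_eq, Set.mem_iInter]
      refine ⟨fun h x _ => by rw [h], fun h => ?_⟩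
      ext x
      exact ⟨fun hx => (h x (hU t hx)).1 hx, fun hx => (h x (Finset.mem_powerset.1 hW hx)).2 hx⟩
    rw [this]
    refine Finset.measurableSet_biInter _ fun x hx => ?_
    by_cases hxW : x ∈ W
    · simpa [hxW] using hmeas x hx
    · have : {t | x ∈ a t ↔ x ∈ W} = {t | x ∈ a t}ᶜ := by
        ext t
        simp [hxW]
      rw [this]
      exact (hmeas x hx).compl
  have hsum : (fun t => G (a t)) =
      fun t => ∑ W ∈ U.powerset, Set.indicator {t | a t = W} (fun _ => G W) t := by
    funext t
    rw [Finset.sum_eq_single (a t)]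
    · simp
    · intro W _ hne
      exact Set.indicator_of_notMem (fun h => hne (Eq.symm h)) _
    · intro h
      exact absurd (Finset.mem_powerset.2 (hU t)) h
  rw [hsum]
  refine integrable_finsetSum _ fun W hW => ?_
  by_cases hWe : W = ∅
  · simp [hWe, hG]
  · refine (integrable_indicator_iff (hlevel W hW)).2 (integrableOn_const ?_)
    refine ((measure_mono fun t ht => ?_).trans_lt hK).ne
    by_contra hc
    exact hWe ((Eq.symm ht).trans (hempty t hc))

variable {ι : Type*} {Ilo Ihi : ι → ℝ} {X : Finset ι} {d : ℝ}

lemma mem_activeJ {t : ℝ} {J : ι} :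
    J ∈ activeJ Ilo Ihi X t ↔ J ∈ X ∧ Ilo J ≤ t ∧ t < Ihi J := by
  simp [activeJ]

lemma inl_mem_activeJH {t : ℝ} {J : ι} :
    Sum.inl J ∈ activeJH Ilo Ihi X d t ↔ J ∈ X ∧ Ilo J ≤ t ∧ t < Ihi J := by
  simp [activeJH]

lemma inr_mem_activeJH {t : ℝ} {J : ι} :
    Sum.inr J ∈ activeJH Ilo Ihi X d t ↔
      J ∈ X ∧ (Ihi J ≤ t ∧ t < Ihi J + d) ∧ t ∈ spanSet Ilo Ihi X := by
  simp [activeJH]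

lemma mem_spanSet {t : ℝ} : t ∈ spanSet Ilo Ihi X ↔ ∃ J ∈ X, Ilo J ≤ t ∧ t < Ihi J := by
  simp only [spanSet, Set.mem_iUnion, Set.mem_Ico, exists_prop]

lemma measurableSet_spanSet : MeasurableSet (spanSet Ilo Ihi X) :=
  Finset.measurableSet_biUnion _ fun _ _ => measurableSet_Ico

lemma volume_spanSet_lt_top : volume (spanSet Ilo Ihi X) < ⊤ :=
  (measure_biUnion_lt_top X.finite_toSet fun _ _ => by simp)

lemma activeJ_eq_empty {t : ℝ} (ht : t ∉ spanSet Ilo Ihi X) : activeJ Ilo Ihi X t = ∅ :=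
  Finset.eq_empty_of_forall_notMem fun J hJ =>
    ht (mem_spanSet.2 ⟨J, (mem_activeJ.1 hJ).1, (mem_activeJ.1 hJ).2⟩)

lemma activeJH_eq_empty {t : ℝ} (ht : t ∉ spanSet Ilo Ihi X) : activeJH Ilo Ihi X d t = ∅ := by
  refine Finset.eq_empty_of_forall_notMem fun x hx => ht ?_
  rcases x with J | J
  · have := inl_mem_activeJH.1 hx
    exact mem_spanSet.2 ⟨J, this.1, this.2⟩
  · exact (inr_mem_activeJH.1 hx).2.2

lemma integrable_activeJ (G : Finset ι → ℝ) (hG : G ∅ = 0) :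
    Integrable (fun t => G (activeJ Ilo Ihi X t)) := by
  refine integrable_comp_finset X (activeJ Ilo Ihi X) (fun t => Finset.filter_subset _ _) (fun J hJ => ?_)
    volume_spanSet_lt_top (fun t ht => activeJ_eq_empty ht) G hG
  have : {t | J ∈ activeJ Ilo Ihi X t} = Set.Ico (Ilo J) (Ihi J) := by
    ext t
    simp [mem_activeJ, hJ]
  rw [this]
  exact measurableSet_Ico

lemma integrable_activeJH (G : Finset (ι ⊕ ι) → ℝ) (hG : G ∅ = 0) :
    Integrable (fun t => G (activeJH Ilo Ihi X d t)) := by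
  refine integrable_comp_finset (X.image Sum.inl ∪ X.image Sum.inr) (activeJH Ilo Ihi X d)
    (fun t => Finset.filter_subset _ _) (fun x hx => ?_)
    volume_spanSet_lt_top (fun t ht => activeJH_eq_empty ht) G hG
  rcases x with J | J
  · have hJ : J ∈ X := by simpa using hx
    have : {t | Sum.inl J ∈ activeJH Ilo Ihi X d t} = Set.Ico (Ilo J) (Ihi J) := by
      ext t
      simp [inl_mem_activeJH, hJ]
    rw [this]
    exact measurableSet_Ico
  · have hJ : J ∈ X := by simpa using hx
    have : {t | Sum.inr J ∈ activeJH Ilo Ihi X d t} =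
        Set.Ico (Ihi J) (Ihi J + d) ∩ spanSet Ilo Ihi X := by
      ext t
      simp [inr_mem_activeJH, hJ]
    rw [this]
    exact measurableSet_Ico.inter measurableSet_spanSet

/-- The charge of `J` in `W`, extended by `0` to elements outside `W`. -/
noncomputable def charge₀ {κ : Type*} (m : ℕ) (g r : ℕ → ℝ) (s : κ → ℝ) (W : Finset κ) (J : κ) :
    ℝ :=
  if J ∈ W then charge m g r s W J else 0

lemma sum_charge_eq {κ : Type*} (m : ℕ) (g r : ℕ → ℝ) (s : κ → ℝ) {W U : Finset κ}
    (hWU : W ⊆ U) : ∑ J ∈ W, charge m g r s W J = ∑ J ∈ U, charge₀ m g r s W J := by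
  rw [← Finset.sum_subset hWU fun J _ hJ => show charge₀ m g r s W J = 0 from if_neg hJ]
  exact Finset.sum_congr rfl fun J hJ => (if_pos hJ).symm

lemma integral_comp_affine (F : ℝ → ℝ) {c : ℝ} (hc : 0 < c) (b : ℝ) :
    ∫ t, F (c * t + b) = c⁻¹ * ∫ t, F t := by
  have h1 := Measure.integral_comp_mul_left (fun t => F (t + b)) c
  rw [h1, integral_add_right_eq_self F b, abs_of_pos (inv_pos.2 hc), smul_eq_mul]

variable {m : ℕ} {g r : ℕ → ℝ} {s : ι → ℝ}

lemma charge₀_nonneg (hm : 1 ≤ m) (hV : Valid m g r) {W : Finset ι}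
    (hW : ∀ J ∈ W, 0 < s J ∧ s J ≤ g m) (J : ι) : 0 ≤ charge₀ m g r s W J := by
  unfold charge₀
  split_ifs with h
  · exact charge_nonneg hm hV hW h
  · exact le_rfl

lemma activeJ_sizes (hs : ∀ J ∈ X, 0 < s J ∧ s J ≤ g m) (t : ℝ) :
    ∀ J ∈ activeJ Ilo Ihi X t, 0 < s J ∧ s J ≤ g m :=
  fun J hJ => hs J (mem_activeJ.1 hJ).1

lemma activeJH_sizes (hs : ∀ J ∈ X, 0 < s J ∧ s J ≤ g m) (t : ℝ) :
    ∀ x ∈ activeJH Ilo Ihi X d t, 0 < Sum.elim s s x ∧ Sum.elim s s x ≤ g m := by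
  rintro (J | J) hx
  · exact hs J (inl_mem_activeJH.1 hx).1
  · exact hs J (inr_mem_activeJH.1 hx).1

/-- An original job is charged no more once the artificial jobs are added. -/
lemma charge₀_inl_le (hm : 1 ≤ m) (hV : Valid m g r) (hs : ∀ J ∈ X, 0 < s J ∧ s J ≤ g m)
    (t : ℝ) (J : ι) :
    charge₀ m g r (Sum.elim s s) (activeJH Ilo Ihi X d t) (Sum.inl J) ≤
      charge₀ m g r s (activeJ Ilo Ihi X t) J := by
  have hiff : Sum.inl J ∈ activeJH Ilo Ihi X d t ↔ J ∈ activeJ Ilo Ihi X t := by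
    rw [inl_mem_activeJH, mem_activeJ]
  by_cases hJ : J ∈ activeJ Ilo Ihi X t
  · rw [charge₀, charge₀, if_pos (hiff.2 hJ), if_pos hJ]
    exact charge_anti hm hV (activeJ_sizes hs t) (activeJH_sizes hs t) Sum.inl
      Sum.inl_injective.injOn (fun K hK => inl_mem_activeJH.2 (mem_activeJ.1 hK))
      (fun K => rfl) hJ
  · rw [charge₀, charge₀, if_neg (hJ ∘ hiff.1), if_neg hJ]

/-- If every job active at `t` is still represented at `t'`, the artificial job of `J` is charged
at `t'` no more than `J` at `t`. -/
lemma charge₀_inr_le (hm : 1 ≤ m) (hV : Valid m g r) (hs : ∀ J ∈ X, 0 < s J ∧ s J ≤ g m)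
    {t t' : ℝ} (J : ι) (htd : t' ≤ t + d) (hlo : Ilo J ≤ t) (hhi : t < Ihi J) :
    charge₀ m g r (Sum.elim s s) (activeJH Ilo Ihi X d t') (Sum.inr J) ≤
      charge₀ m g r s (activeJ Ilo Ihi X t) J := by
  by_cases hJ' : Sum.inr J ∈ activeJH Ilo Ihi X d t'
  · obtain ⟨hJX, ⟨h1, h2⟩, hspan⟩ := inr_mem_activeJH.1 hJ'
    have hJ : J ∈ activeJ Ilo Ihi X t := mem_activeJ.2 ⟨hJX, hlo, hhi⟩
    rw [charge₀, charge₀, if_pos hJ', if_pos hJ]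
    let e : ι → ι ⊕ ι := fun K => if t' < Ihi K then Sum.inl K else Sum.inr K
    have heJ : e J = Sum.inr J := if_neg (not_lt.2 h1)
    rw [← heJ]
    refine charge_anti hm hV (activeJ_sizes hs t) (activeJH_sizes hs t') e ?_ ?_ ?_ hJ
    · intro K _ K' _ h
      simp only [e] at h
      split_ifs at h
      · exact Sum.inl_injective h
      · exact Sum.inr_injective h
    · intro K hK
      obtain ⟨hKX, hK1, hK2⟩ := mem_activeJ.1 hK
      simp only [e]
      split_ifs with h
      · exact inl_mem_activeJH.2 ⟨hKX, by linarith, h⟩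
      · exact inr_mem_activeJH.2 ⟨hKX, ⟨not_lt.1 h, by linarith⟩, hspan⟩
    · intro K
      simp only [e]
      split_ifs <;> rfl
  · rw [charge₀, if_neg hJ']
    exact charge₀_nonneg hm hV (activeJ_sizes hs t) J

lemma integrable_charge₀_activeJ (m : ℕ) (g r : ℕ → ℝ) (s : ι → ℝ) (J : ι) :
    Integrable (fun t => charge₀ m g r s (activeJ Ilo Ihi X t) J) :=
  integrable_activeJ (fun W => charge₀ m g r s W J) (by simp [charge₀])

lemma integrable_charge₀_activeJH (m : ℕ) (g r : ℕ → ℝ) (s : ι ⊕ ι → ℝ) (x : ι ⊕ ι) :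
    Integrable (fun t => charge₀ m g r s (activeJH Ilo Ihi X d t) x) :=
  integrable_activeJH (fun W => charge₀ m g r s W x) (by simp [charge₀])

/-- Over its whole lifetime, an artificial job costs at most `d` times the original job. -/
lemma integral_charge₀_inr_le (hm : 1 ≤ m) (hV : Valid m g r)
    (hs : ∀ J ∈ X, 0 < s J ∧ s J ≤ g m) (J : ι) (hlen : 1 ≤ Ihi J - Ilo J)
    (hd : Ihi J - Ilo J ≤ d) :
    ∫ t, charge₀ m g r (Sum.elim s s) (activeJH Ilo Ihi X d t) (Sum.inr J) ≤
      d * ∫ t, charge₀ m g r s (activeJ Ilo Ihi X t) J := by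
  set Q : ℝ → ℝ := fun t => charge₀ m g r (Sum.elim s s) (activeJH Ilo Ihi X d t) (Sum.inr J)
    with hQ
  set R : ℝ → ℝ := fun t => charge₀ m g r s (activeJ Ilo Ihi X t) J with hR
  have hlen0 : 0 < Ihi J - Ilo J := by linarith
  set c := d / (Ihi J - Ilo J) with hc
  have hcl : c * (Ihi J - Ilo J) = d := div_mul_cancel₀ _ hlen0.ne'
  have hc1 : 1 ≤ c := (one_le_div hlen0).2 hd
  have hc0 : 0 < c := by linarith
  set b := Ihi J - c * Ilo J with hb
  have hR0 : ∀ t, 0 ≤ R t := fun t => charge₀_nonneg hm hV (activeJ_sizes hs t) J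
  have hle : ∀ t, Q (c * t + b) ≤ R t := by
    intro t
    by_cases ht : Ilo J ≤ t ∧ t < Ihi J
    · refine charge₀_inr_le hm hV hs J ?_ ht.1 ht.2
      nlinarith [mul_nonneg (sub_nonneg.2 hc1) (sub_nonneg.2 ht.2.le)]
    · refine le_of_eq_of_le (if_neg fun h => ht ?_) (hR0 t)
      obtain ⟨-, ⟨h1, h2⟩, -⟩ := inr_mem_activeJH.1 h
      constructor
      · by_contra! hlt
        nlinarith [mul_pos hc0 (sub_pos.2 hlt)]
      · by_contra! hge
        nlinarith [mul_nonneg hc0.le (sub_nonneg.2 hge)]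
  have hQi : Integrable Q := integrable_charge₀_activeJH m g r _ _
  have hRi : Integrable R := integrable_charge₀_activeJ m g r s J
  have hQi' : Integrable (fun t => Q (c * t + b)) :=
    (hQi.comp_add_right b).comp_mul_left' hc0.ne'
  have hint := integral_mono hQi' hRi hle
  rw [integral_comp_affine Q hc0 b, inv_mul_le_iff₀ hc0] at hint
  have hcd : c ≤ d := div_le_self (by linarith) hlen
  exact hint.trans (mul_le_mul_of_nonneg_right hcd (integral_nonneg hR0))

end Integrals

/-- `∫_{t ∈ span(𝒥)} ∑_{J ∈ 𝒥(t) ∪ ℋ(t)} r̃(𝒥(t) ∪ ℋ(t))(J) dt ≤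
 (d + 1) · ∫_{t ∈ span(𝒥)} ∑_{J ∈ 𝒥(t)} r̃(𝒥(t))(J) dt`,
where `ℋ = {F_d(J) : J ∈ 𝒥}` (artificial jobs represented via `Sum.inr`). -/
theorem statement_16 {ι : Type*} (m : ℕ) (g r : ℕ → ℝ) (s Ilo Ihi : ι → ℝ)
    (𝒥 : Finset ι) (μ d : ℝ)
    (hm : 1 ≤ m)
    (hg1 : 0 < g 1) (hr1 : 0 < r 1)
    (hg : ∀ i j, 1 ≤ i → i < j → j ≤ m → g i < g j)
    (hr : ∀ i j, 1 ≤ i → i < j → j ≤ m → r i < r j)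
    (hJ : 𝒥.Nonempty)
    (hs : ∀ J ∈ 𝒥, 0 < s J ∧ s J ≤ g m)
    (hμ : 1 ≤ μ)
    (hlen : ∀ J ∈ 𝒥, 1 ≤ Ihi J - Ilo J ∧ Ihi J - Ilo J ≤ μ)
    (hd : μ ≤ d) :
    (∫ t in spanSet Ilo Ihi 𝒥,
        ∑ x ∈ activeJH Ilo Ihi 𝒥 d t,
          charge m g r (Sum.elim s s) (activeJH Ilo Ihi 𝒥 d t) x)
      ≤ (d + 1) *
        ∫ t in spanSet Ilo Ihi 𝒥,
          ∑ J ∈ activeJ Ilo Ihi 𝒥 t,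
            charge m g r s (activeJ Ilo Ihi 𝒥 t) J := by
  have hg0 : ∀ i, 1 ≤ i → i ≤ m → 0 < g i := fun i h1 h2 => by
    rcases h1.eq_or_lt with rfl | h
    · exact hg1
    · exact hg1.trans (hg 1 i le_rfl h h2)
  have hr0 : ∀ i, 1 ≤ i → i ≤ m → 0 < r i := fun i h1 h2 => by
    rcases h1.eq_or_lt with rfl | h
    · exact hr1
    · exact hr1.trans (hr 1 i le_rfl h h2)
  have hV : Valid m g r := ⟨hg0, hr0⟩
  rw [setIntegral_eq_integral_of_forall_compl_eq_zero fun t ht => by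
      rw [activeJH_eq_empty ht, Finset.sum_empty],
    setIntegral_eq_integral_of_forall_compl_eq_zero fun t ht => by
      rw [activeJ_eq_empty ht, Finset.sum_empty]]
  have hL : ∀ t, ∑ x ∈ activeJH Ilo Ihi 𝒥 d t,
      charge m g r (Sum.elim s s) (activeJH Ilo Ihi 𝒥 d t) x =
      ∑ J ∈ 𝒥, charge₀ m g r (Sum.elim s s) (activeJH Ilo Ihi 𝒥 d t) (Sum.inl J) +
        ∑ J ∈ 𝒥, charge₀ m g r (Sum.elim s s) (activeJH Ilo Ihi 𝒥 d t) (Sum.inr J) := by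
    intro t
    rw [sum_charge_eq m g r (Sum.elim s s) (U := 𝒥.disjSum 𝒥), Finset.sum_disjSum]
    rintro (J | J) hx
    · exact Finset.inl_mem_disjSum.2 (inl_mem_activeJH.1 hx).1
    · exact Finset.inr_mem_disjSum.2 (inr_mem_activeJH.1 hx).1
  have hR : ∀ t, ∑ J ∈ activeJ Ilo Ihi 𝒥 t, charge m g r s (activeJ Ilo Ihi 𝒥 t) J =
      ∑ J ∈ 𝒥, charge₀ m g r s (activeJ Ilo Ihi 𝒥 t) J :=
    fun t => sum_charge_eq m g r s (Finset.filter_subset _ _)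
  simp only [hL, hR]
  rw [integral_add
      (integrable_finsetSum _ fun J _ => integrable_charge₀_activeJH m g r _ _)
      (integrable_finsetSum _ fun J _ => integrable_charge₀_activeJH m g r _ _),
    integral_finsetSum _ fun J _ => integrable_charge₀_activeJH m g r _ _,
    integral_finsetSum _ fun J _ => integrable_charge₀_activeJH m g r _ _,
    integral_finsetSum _ fun J _ => integrable_charge₀_activeJ m g r s J,
    add_mul, one_mul, add_comm, Finset.mul_sum]
  refine add_le_add (Finset.sum_le_sum fun J hJ => ?_) (Finset.sum_le_sum fun J hJ => ?_)
  · exact integral_charge₀_inr_le hm hV hs J (hlen J hJ).1 ((hlen J hJ).2.trans hd)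
  · exact integral_mono (integrable_charge₀_activeJH m g r _ _)
      (integrable_charge₀_activeJ m g r s J) fun t => charge₀_inl_le hm hV hs t J

end BSHM
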